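/- For every prime p, let p_succ denote the smallest prime strictly larger than p. Then (p_succ - p)/p tends to 0 as p tends to infinity. -/

import Mathlib

/-- The smallest prime strictly larger than `p`. -/
noncomputable def succPrime (p : ℕ) : ℕ := sInf {q : ℕ | q.Prime ∧ p < q}

/-!
Fix `r > 1`, and let `φ` be a smooth compactly supported kernel with `φ 0 > 0` whose Fourier
transform is nonpositive at distance at least `log r / 2` from the origin. Such a kernel exists:
if `k` is an autocorrelation then `𝓕 k = |𝓕 g|² ≥ 0`, and `D² k + k'' / 4π²` has Fourier transform
`(D² - y²) 𝓕 k`, which is nonpositive for `|y| ≥ D`.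

Since `ζ` has no zeros on the line `re s = 1`, `-ζ'/ζ` extends continuously to it apart from a
simple pole at `1`. Integrating it against `t ↦ e^{2πitu} φ t` and using the Riemann–Lebesgue lemma,
the sums `∑ Λ(n) n⁻¹ 𝓕 φ (log n - u)`, taken as limits `σ → 1⁺` of the sums with `n^{-σ}`, tend to
`φ 0 > 0` as `u → ∞`. With `u = log x + log r / 2` only the `n` in `(x, r x]` contribute positively,
so that `∑_{x < n ≤ r x} Λ(n) ≫ x`. Proper prime powers account for `O(√x)` of this sum, hence
`(x, r x]` contains a prime once `x` is large.
-/

open MeasureTheory Filter Topology FourierTransform Complex Convolution Set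
open scoped Real ComplexConjugate SchwartzMap ContDiff
open ArithmeticFunction (vonMangoldt)
open Chebyshev (theta psi)

section Fourier

variable {E : Type*} [NormedAddCommGroup E] [NormedSpace ℂ E]

theorem fourier_fourierChar_smul (φ : ℝ → E) (u y : ℝ) :
    𝓕 (fun t ↦ 𝐞 (t * u) • φ t) y = 𝓕 φ (y - u) := by
  simp_rw [Real.fourier_real_eq, smul_smul, ← AddChar.map_add_eq_mul]
  congr! 4
  ring

theorem fourier_comp_mul_right (φ : ℝ → E) {a : ℝ} (ha : 0 < a) (y : ℝ) :
    𝓕 (fun t ↦ φ (t * a)) y = a⁻¹ • 𝓕 φ (y / a) := by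
  simp_rw [Real.fourier_real_eq]
  rw [← abs_of_pos (inv_pos.2 ha), ← Measure.integral_comp_mul_right _ a]
  congr! 4
  field_simp

theorem integral_mul_fourier_eq {f g : ℝ → ℂ} (hf : Integrable f) (hg : Integrable g) :
    ∫ t, f t * 𝓕 g t = ∫ y, 𝓕 f y * g y := by
  have hflip := VectorFourier.integral_fourierIntegral_smul_eq_flip (L := innerₗ ℝ)
    Real.continuous_fourierChar continuous_inner hf hg
  rw [flip_innerₗ] at hflip
  exact hflip.symm

theorem integral_fourier_eq_apply_zero [CompleteSpace E] {φ : ℝ → E} (hφ : Continuous φ)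
    (hφi : Integrable φ) (hF : Integrable (𝓕 φ)) : ∫ y, 𝓕 φ y = φ 0 := by
  have := congrFun (hφ.fourierInv_fourier_eq hφi hF) 0
  simpa [Real.fourierInv_eq] using this

theorem fourier_indicator_exp_neg {c : ℂ} (hc : 0 < c.re) (t : ℝ) :
    𝓕 ((Ioi 0).indicator fun y : ℝ ↦ exp (-(c * y))) t = 1 / (c + 2 * π * t * I) := by
  have hre : (-(c + 2 * π * t * I)).re < 0 := by simpa
  have hexp (y : ℝ) : exp (↑(-2 * π * y * t) * I) * exp (-(c * y)) =
      exp (-(c + 2 * π * t * I) * y) := by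
    rw [← exp_add]
    push_cast
    ring_nf
  rw [Real.fourier_real_eq_integral_exp_smul]
  simp_rw [← indicator_smul_apply (Ioi (0 : ℝ)) fun y : ℝ ↦ exp (↑(-2 * π * y * t) * I)]
  rw [integral_indicator measurableSet_Ioi]
  simp_rw [smul_eq_mul, hexp, integral_exp_mul_complex_Ioi hre, ofReal_zero, mul_zero, exp_zero,
    neg_div_neg_eq]

theorem integral_mul_one_div_add_two_pi_mul_I {φ : ℝ → ℂ} (hφ : Integrable φ) {c : ℂ}
    (hc : 0 < c.re) :
    ∫ t, φ t * (1 / (c + 2 * π * t * I)) = ∫ y in Ioi (0 : ℝ), exp (-(c * y)) * 𝓕 φ y := by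
  have hexp : IntegrableOn (fun y : ℝ ↦ exp (-(c * y))) (Ioi 0) := by
    simpa using integrableOn_exp_mul_complex_Ioi (a := -c) (by simpa using hc) 0
  simp_rw [← fourier_indicator_exp_neg hc,
    integral_mul_fourier_eq hφ (hexp.integrable_indicator measurableSet_Ioi),
    ← integral_indicator measurableSet_Ioi, indicator_mul_left, mul_comm]

theorem tendsto_integral_fourierChar_smul_atTop (f : ℝ → E) :
    Tendsto (fun u ↦ ∫ t, 𝐞 (t * u) • f t) atTop (𝓝 0) := by
  have hneg : Tendsto (fun u : ℝ ↦ -u) atTop (cocompact ℝ) :=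
    tendsto_neg_atTop_atBot.mono_right atBot_le_cocompact
  refine ((Real.zero_at_infty_fourier f).comp hneg).congr fun u ↦ ?_
  simp_rw [Function.comp_apply, Real.fourier_real_eq, mul_neg, neg_neg]

theorem tendsto_setIntegral_Ioi_comp_sub_atTop {F : Type*} [NormedAddCommGroup F]
    [NormedSpace ℝ F] {f : ℝ → F} (hf : Integrable f) (a : ℝ) :
    Tendsto (fun u ↦ ∫ y in Ioi a, f (y - u)) atTop (𝓝 (∫ y, f y)) := by
  have hcover := aecover_Ioi (μ := volume)
    (tendsto_atBot_add_const_left atTop a tendsto_neg_atTop_atBot)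
  refine (hcover.integral_tendsto_of_countably_generated hf).congr fun u ↦ ?_
  rw [← (measurePreserving_sub_right volume u).setIntegral_preimage_emb
    (measurableEmbedding_subRight u), preimage_sub_const_Ioi, ← sub_eq_add_neg, sub_add_cancel]

theorem fourier_derivCLM (f : 𝓢(ℝ, E)) (y : ℝ) :
    𝓕 (SchwartzMap.derivCLM ℂ E f) y = (2 * π * I * y) • 𝓕 f y :=
  congrFun (Real.fourier_deriv f.integrable f.differentiable
    (SchwartzMap.derivCLM ℂ E f).integrable) y

theorem fourier_conj_comp_neg (g : ℝ → ℂ) (y : ℝ) :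
    𝓕 (fun t ↦ conj (g (-t))) y = conj (𝓕 g y) := by
  rw [Real.fourier_real_eq, Real.fourier_real_eq, ← integral_conj, ← integral_neg_eq_self]
  simp [Circle.smul_def, ← Circle.coe_inv_eq_conj, AddChar.map_neg_eq_inv]

theorem fourier_convolution_conj_comp_neg {g : ℝ → ℂ} (hg : Integrable g) (y : ℝ) :
    𝓕 (g ⋆[ContinuousLinearMap.mul ℂ ℂ] fun t ↦ conj (g (-t))) y = (‖𝓕 g y‖ ^ 2 : ℝ) := by
  have hg' : Integrable fun t ↦ conj (g (-t)) :=
    conjCLE.toContinuousLinearMap.integrable_comp hg.comp_neg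
  rw [Real.fourier_mul_convolution_eq hg hg', fourier_conj_comp_neg, mul_conj, normSq_eq_norm_sq]

theorem convolution_conj_comp_neg_apply_zero (g : ℝ → ℂ) :
    (g ⋆[ContinuousLinearMap.mul ℂ ℂ] fun t ↦ conj (g (-t))) 0 = (∫ t, ‖g t‖ ^ 2 : ℝ) := by
  rw [← integral_complex_ofReal, convolution_def]
  simp [mul_conj, normSq_eq_norm_sq]

end Fourier

section Kernel

/-- A test kernel for short intervals: a compactly supported Schwartz function that is positive at
the origin and whose Fourier transform is nonpositive outside `(-δ, δ)`. Only real parts are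
constrained, since only these enter the comparison of sums with nonnegative coefficients. -/
structure IsMinorantKernel (δ : ℝ) (φ : 𝓢(ℝ, ℂ)) : Prop where
  hasCompactSupport : HasCompactSupport φ
  re_apply_zero_pos : 0 < (φ 0).re
  re_fourier_nonpos (y : ℝ) : δ ≤ |y| → (𝓕 φ y).re ≤ 0

theorem IsMinorantKernel.dilate {δ a : ℝ} {φ : 𝓢(ℝ, ℂ)} (hφ : IsMinorantKernel δ φ) (ha : 0 < a) :
    IsMinorantKernel (a * δ) (SchwartzMap.compCLMOfContinuousLinearEquiv ℂ
      (ContinuousLinearEquiv.unitsEquivAut ℝ (.mk0 a ha.ne')) φ) where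
  hasCompactSupport := hφ.hasCompactSupport.comp_homeomorph
    (ContinuousLinearEquiv.unitsEquivAut ℝ (.mk0 a ha.ne')).toHomeomorph
  re_apply_zero_pos := by simpa using hφ.re_apply_zero_pos
  re_fourier_nonpos y hy := by
    have hF : 𝓕 (SchwartzMap.compCLMOfContinuousLinearEquiv ℂ
        (ContinuousLinearEquiv.unitsEquivAut ℝ (.mk0 a ha.ne')) φ) y = a⁻¹ • 𝓕 φ (y / a) :=
      fourier_comp_mul_right φ ha y
    rw [hF, smul_re]
    refine smul_nonpos_of_nonneg_of_nonpos (by positivity) (hφ.re_fourier_nonpos _ ?_)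
    rwa [abs_div, abs_of_pos ha, le_div_iff₀' ha]

theorem exists_schwartzMap_re_fourier_nonneg : ∃ k : 𝓢(ℝ, ℂ), HasCompactSupport k ∧
    0 < (k 0).re ∧ ∀ y, 0 ≤ (𝓕 k y).re := by
  let b : ContDiffBump (0 : ℝ) := ⟨1, 2, one_pos, one_lt_two⟩
  let g : ℝ → ℂ := fun t ↦ b t
  let g' : ℝ → ℂ := fun t ↦ conj (g (-t))
  have hg : ContDiff ℝ ∞ g := ofRealCLM.contDiff.comp b.contDiff
  have hgc : HasCompactSupport g := b.hasCompactSupport.comp_left ofReal_zero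
  have hg0 : g 0 = 1 :=
    congrArg ofReal (b.one_of_mem_closedBall (Metric.mem_closedBall_self zero_le_one))
  have hg' : Continuous g' := by fun_prop
  have hgc' : HasCompactSupport g' :=
    (hgc.comp_homeomorph (Homeomorph.neg ℝ)).comp_left (map_zero conj)
  have hk : ContDiff ℝ ∞ (g ⋆[ContinuousLinearMap.mul ℂ ℂ] g') :=
    hgc.contDiff_convolution_left (ContinuousLinearMap.mul ℝ ℂ) hg hg'.locallyIntegrable
  have hkc : HasCompactSupport (g ⋆[ContinuousLinearMap.mul ℂ ℂ] g') := hgc.convolution _ hgc'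
  refine ⟨hkc.toSchwartzMap hk, hkc, ?_, fun y ↦ ?_⟩
  · rw [HasCompactSupport.toSchwartzMap_toFun, convolution_conj_comp_neg_apply_zero, ofReal_re]
    exact Continuous.integral_pos_of_hasCompactSupport_nonneg_nonzero (x := 0) (by fun_prop)
      (hgc.norm.comp_left (zero_pow two_ne_zero)) (fun t ↦ by positivity) (by simp [hg0])
  · have hF : 𝓕 (hkc.toSchwartzMap hk) y = (‖𝓕 g y‖ ^ 2 : ℝ) :=
      fourier_convolution_conj_comp_neg (hg.continuous.integrable_of_hasCompactSupport hgc) y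
    rw [hF, ofReal_re]
    positivity

theorem fourier_smul_add_smul_derivCLM_derivCLM (k : 𝓢(ℝ, ℂ)) (D y : ℝ) :
    𝓕 (D ^ 2 • k + (4 * π ^ 2)⁻¹ • SchwartzMap.derivCLM ℂ ℂ (SchwartzMap.derivCLM ℂ ℂ k)) y =
      (D ^ 2 - y ^ 2 : ℝ) * 𝓕 k y := by
  have hsq : (2 * π * I * y) ^ 2 = -(4 * π ^ 2) * (y : ℂ) ^ 2 := by
    rw [mul_pow, mul_pow, I_sq]
    ring
  rw [FourierTransform.fourier_add, FourierTransform.fourier_smul, FourierTransform.fourier_smul,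
    add_apply, smul_apply, smul_apply, fourier_derivCLM, fourier_derivCLM, smul_smul, ← pow_two,
    hsq, real_smul, real_smul, smul_eq_mul]
  push_cast
  field_simp
  ring

theorem exists_pos_exists_isMinorantKernel : ∃ D > 0, ∃ φ, IsMinorantKernel D φ := by
  obtain ⟨k, hkc, hk0, hk⟩ := exists_schwartzMap_re_fourier_nonneg
  let k'' := SchwartzMap.derivCLM ℂ ℂ (SchwartzMap.derivCLM ℂ ℂ k)
  have hk''c : HasCompactSupport k'' := hkc.deriv.deriv
  have htop : Tendsto (fun D : ℝ ↦ D ^ 2 * (k 0).re + (4 * π ^ 2)⁻¹ * (k'' 0).re) atTop atTop :=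
    tendsto_atTop_add_const_right _ _ ((tendsto_pow_atTop two_ne_zero).atTop_mul_const hk0)
  obtain ⟨D, hD, hD0⟩ := ((eventually_gt_atTop 0).and (htop.eventually_gt_atTop 0)).exists
  refine ⟨D, hD, D ^ 2 • k + (4 * π ^ 2)⁻¹ • k'', ?_, ?_, fun y hy ↦ ?_⟩
  · exact (hkc.smul_left (f := fun _ ↦ D ^ 2)).add (hk''c.smul_left (f := fun _ ↦ (4 * π ^ 2)⁻¹))
  · rwa [add_apply, smul_apply, smul_apply, add_re, smul_re, smul_re]
  · rw [fourier_smul_add_smul_derivCLM_derivCLM, re_ofReal_mul]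
    refine mul_nonpos_of_nonpos_of_nonneg (sub_nonpos.2 ?_) (hk y)
    rwa [sq_le_sq, abs_of_pos hD]

theorem exists_isMinorantKernel {δ : ℝ} (hδ : 0 < δ) : ∃ φ, IsMinorantKernel δ φ := by
  obtain ⟨D, hD, φ, hφ⟩ := exists_pos_exists_isMinorantKernel
  exact ⟨_, div_mul_cancel₀ δ hD.ne' ▸ hφ.dilate (div_pos hδ hD)⟩

end Kernel

theorem LSeries_term_add_two_pi_mul_I (a : ℕ → ℂ) (s : ℂ) (t : ℝ) (n : ℕ) :
    LSeries.term a (s + 2 * π * t * I) n = 𝐞 (-(t * Real.log n)) • LSeries.term a s n := by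
  rcases eq_or_ne n 0 with rfl | hn
  · simp
  have hn' : (n : ℂ) ≠ 0 := mod_cast hn
  have hchar : (𝐞 (-(t * Real.log n)) : ℂ) = ((n : ℂ) ^ (2 * π * t * I))⁻¹ := by
    rw [cpow_def_of_ne_zero hn', ← exp_neg, Real.fourierChar_apply, ← natCast_log]
    push_cast
    ring_nf
  rw [LSeries.term_of_ne_zero hn, LSeries.term_of_ne_zero hn, cpow_add _ _ hn', Circle.smul_def,
    hchar, smul_eq_mul, ← div_div, div_eq_inv_mul _ (_ ^ (2 * π * t * I))]

theorem hasSum_term_mul_fourier_log {a : ℕ → ℂ} {s : ℂ} (ha : LSeriesSummable a s) {φ : ℝ → ℂ}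
    (hφ : Integrable φ) :
    HasSum (fun n ↦ LSeries.term a s n * 𝓕 φ (Real.log n))
      (∫ t, φ t * LSeries a (s + 2 * π * t * I)) := by
  have hterm (n : ℕ) (t : ℝ) : φ t * LSeries.term a (s + 2 * π * t * I) n =
      LSeries.term a s n * 𝐞 (-(t * Real.log n)) • φ t := by
    rw [LSeries_term_add_two_pi_mul_I, mul_smul_comm, mul_smul_comm, mul_comm (φ t)]
  have hchar (y : ℝ) : Integrable fun t ↦ 𝐞 (-(t * y)) • φ t := by
    simpa [mul_comm y] using (Real.fourierIntegral_convergent_iff y).2 hφ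
  have hint (n : ℕ) : Integrable fun t ↦ φ t * LSeries.term a (s + 2 * π * t * I) n := by
    simp_rw [hterm]
    exact (hchar _).const_mul _
  have hsum : Summable fun n ↦ ∫ t, ‖φ t * LSeries.term a (s + 2 * π * t * I) n‖ := by
    simp_rw [hterm, norm_mul, Circle.norm_smul, integral_const_mul]
    exact ha.norm.mul_right _
  have key := hasSum_integral_of_summable_integral_norm hint hsum
  simp_rw [tsum_mul_left] at key
  simp_rw [hterm, integral_const_mul, ← Real.fourier_real_eq] at key
  exact key

theorem tendsto_integral_mul_nhdsGT {φ : ℝ → ℂ} (hφ : Continuous φ) (hφc : HasCompactSupport φ)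
    {G : ℂ → ℂ} (hG : ContinuousOn G {s | 1 ≤ s.re}) :
    Tendsto (fun σ : ℝ ↦ ∫ t, φ t * G (σ + 2 * π * t * I)) (𝓝[>] 1)
      (𝓝 (∫ t, φ t * G (1 + 2 * π * t * I))) := by
  have hcont : ContinuousOn (fun p : ℝ × ℝ ↦ φ p.2 * G (p.1 + 2 * π * p.2 * I))
      (Ici 1 ×ˢ univ) :=
    (hφ.comp continuous_snd).continuousOn.mul <|
      hG.comp (by fun_prop) fun p hp ↦ by simpa using hp.1
  have := continuousOn_integral_of_compact_support (μ := volume)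
    (f := fun σ t : ℝ ↦ φ t * G (σ + 2 * π * t * I)) hφc hcont fun σ t _ ht ↦ by
      simp [image_eq_zero_of_notMem_tsupport ht]
  simpa using (this 1 self_mem_Ici).mono_left (nhdsWithin_mono 1 Ioi_subset_Ici_self)

theorem tendsto_integral_Ioi_exp_neg_mul {f : ℝ → ℂ} (hf : IntegrableOn f (Ioi 0)) :
    Tendsto (fun c : ℝ ↦ ∫ y in Ioi (0 : ℝ), exp (-(c * y)) * f y) (𝓝[≥] 0)
      (𝓝 (∫ y in Ioi (0 : ℝ), f y)) := by
  refine tendsto_integral_filter_of_dominated_convergence (fun y ↦ ‖f y‖) ?_ ?_ hf.norm ?_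
  · exact .of_forall fun c ↦
      (by fun_prop : Continuous _).aestronglyMeasurable.mul hf.aestronglyMeasurable
  · filter_upwards [self_mem_nhdsWithin] with c hc
    filter_upwards [ae_restrict_mem measurableSet_Ioi] with y hy
    rw [norm_mul, norm_exp]
    refine mul_le_of_le_one_left (norm_nonneg _) (Real.exp_le_one_iff.2 ?_)
    simpa using mul_nonneg hc hy.le
  · refine .of_forall fun y ↦ ?_
    have hc : Continuous fun c : ℝ ↦ exp (-(c * y)) * f y := by fun_prop
    simpa using (hc.tendsto 0).mono_left nhdsWithin_le_nhds

section WienerIkehara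

variable {a : ℕ → ℂ} {A : ℂ} {G : ℂ → ℂ} {φ : ℝ → ℂ}

theorem integral_mul_LSeries_eq (hG : ContinuousOn G {s | 1 ≤ s.re})
    (hGa : EqOn G (fun s ↦ LSeries a s - A / (s - 1)) {s | 1 < s.re})
    (hφ : Continuous φ) (hφc : HasCompactSupport φ) {σ : ℝ} (hσ : 1 < σ) :
    ∫ t, φ t * LSeries a (σ + 2 * π * t * I) = (∫ t, φ t * G (σ + 2 * π * t * I)) +
      A * ∫ y in Ioi (0 : ℝ), exp (-((σ - 1 : ℝ) * y)) * 𝓕 φ y := by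
  have hre : 0 < ((σ - 1 : ℝ) : ℂ).re := by simpa using hσ
  have hne (t : ℝ) : ((σ - 1 : ℝ) : ℂ) + 2 * π * t * I ≠ 0 := fun h ↦
    hre.ne' (by simpa using congrArg re h)
  have hGσ : Continuous fun t : ℝ ↦ G (σ + 2 * π * t * I) :=
    continuousOn_univ.1 (hG.comp (by fun_prop) fun t _ ↦ by simpa using hσ.le)
  have hintG : Integrable fun t ↦ φ t * G (σ + 2 * π * t * I) :=
    (hφ.mul hGσ).integrable_of_hasCompactSupport hφc.mul_right
  have hintA : Integrable fun t ↦ A * (φ t * (1 / ((σ - 1 : ℝ) + 2 * π * t * I))) :=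
    ((hφ.mul (continuous_const.div (by fun_prop) hne)).integrable_of_hasCompactSupport
      hφc.mul_right).const_mul A
  rw [← integral_mul_one_div_add_two_pi_mul_I (hφ.integrable_of_hasCompactSupport hφc) hre,
    ← integral_const_mul, ← integral_add hintG hintA]
  refine integral_congr_ae (.of_forall fun t ↦ ?_)
  have hGL := hGa (show (σ + 2 * π * t * I : ℂ) ∈ {s : ℂ | 1 < s.re} by simpa using hσ)
  simp only [hGL]
  push_cast
  ring

theorem tendsto_tsum_term_mul_fourier_log (ha : ∀ σ : ℝ, 1 < σ → LSeriesSummable a σ)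
    (hG : ContinuousOn G {s | 1 ≤ s.re})
    (hGa : EqOn G (fun s ↦ LSeries a s - A / (s - 1)) {s | 1 < s.re})
    (hφ : Continuous φ) (hφc : HasCompactSupport φ) (hF : IntegrableOn (𝓕 φ) (Ioi 0)) :
    Tendsto (fun σ : ℝ ↦ ∑' n, LSeries.term a σ n * 𝓕 φ (Real.log n)) (𝓝[>] 1)
      (𝓝 ((∫ t, φ t * G (1 + 2 * π * t * I)) + A * ∫ y in Ioi 0, 𝓕 φ y)) := by
  have hsub : Tendsto (fun σ : ℝ ↦ σ - 1) (𝓝[>] 1) (𝓝[≥] 0) := by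
    refine tendsto_nhdsWithin_iff.2 ⟨?_, ?_⟩
    · have : Continuous fun σ : ℝ ↦ σ - 1 := by fun_prop
      simpa using (this.tendsto 1).mono_left nhdsWithin_le_nhds
    · filter_upwards [self_mem_nhdsWithin] with σ hσ using sub_nonneg.2 (mem_Ioi.1 hσ).le
  refine ((tendsto_integral_mul_nhdsGT hφ hφc hG).add
    (((tendsto_integral_Ioi_exp_neg_mul hF).comp hsub).const_mul A)).congr' ?_
  filter_upwards [self_mem_nhdsWithin] with σ hσ
  rw [(hasSum_term_mul_fourier_log (ha σ hσ) (hφ.integrable_of_hasCompactSupport hφc)).tsum_eq,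
    integral_mul_LSeries_eq hG hGa hφ hφc hσ, Function.comp_apply]

theorem exists_tendsto_tsum_term_mul_fourier (ha : ∀ σ : ℝ, 1 < σ → LSeriesSummable a σ)
    (hG : ContinuousOn G {s | 1 ≤ s.re})
    (hGa : EqOn G (fun s ↦ LSeries a s - A / (s - 1)) {s | 1 < s.re})
    (hφ : Continuous φ) (hφc : HasCompactSupport φ) (hF : Integrable (𝓕 φ)) :
    ∃ B : ℝ → ℂ, Tendsto B atTop (𝓝 (A * φ 0)) ∧ ∀ u, Tendsto
      (fun σ : ℝ ↦ ∑' n, LSeries.term a σ n * 𝓕 φ (Real.log n - u)) (𝓝[>] 1) (𝓝 (B u)) := by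
  refine ⟨fun u ↦ (∫ t, 𝐞 (t * u) • (φ t * G (1 + 2 * π * t * I))) +
    A * ∫ y in Ioi 0, 𝓕 φ (y - u), ?_, fun u ↦ ?_⟩
  · rw [← zero_add (A * φ 0),
      ← integral_fourier_eq_apply_zero hφ (hφ.integrable_of_hasCompactSupport hφc) hF]
    exact (tendsto_integral_fourierChar_smul_atTop _).add
      ((tendsto_setIntegral_Ioi_comp_sub_atTop hF 0).const_mul A)
  · have hφu : Continuous fun t ↦ 𝐞 (t * u) • φ t :=
      (Real.continuous_fourierChar.comp (continuous_mul_const u)).smul hφ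
    have hFu : IntegrableOn (𝓕 fun t ↦ 𝐞 (t * u) • φ t) (Ioi 0) := by
      simpa only [funext (fourier_fourierChar_smul φ u)] using (hF.comp_sub_right u).integrableOn
    simpa only [fourier_fourierChar_smul, smul_mul_assoc] using
      tendsto_tsum_term_mul_fourier_log ha hG hGa hφu hφc.smul_left hFu

end WienerIkehara

section Tauberian

variable {a : ℕ → ℝ}

theorem re_term_mul_le_indicator_Ioc (ha : ∀ n, 0 ≤ a n) {f : ℝ → ℂ} {δ M : ℝ}
    (hM : ∀ y, ‖f y‖ ≤ M) (hf : ∀ y, δ ≤ |y| → (f y).re ≤ 0) {σ x : ℝ} (hσ : 1 ≤ σ) (hx : 0 < x)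
    (n : ℕ) :
    (LSeries.term (fun n ↦ a n) σ n * f (Real.log n - (Real.log x + δ))).re ≤
      (Finset.Ioc ⌊x⌋₊ ⌊Real.exp (2 * δ) * x⌋₊ : Set ℕ).indicator (fun n ↦ M / x * a n) n := by
  have hM0 : 0 ≤ M := (norm_nonneg _).trans (hM 0)
  rcases eq_or_ne n 0 with rfl | hn
  · simp
  have hn1 : (1 : ℝ) ≤ n := mod_cast Nat.one_le_iff_ne_zero.2 hn
  have hn0 : (0 : ℝ) < n := one_pos.trans_le hn1
  have han : 0 ≤ a n / (n : ℝ) ^ σ := div_nonneg (ha n) (by positivity)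
  have hterm : LSeries.term (fun n ↦ a n) σ n = (a n / (n : ℝ) ^ σ : ℝ) := by
    rw [LSeries.term_of_ne_zero hn, ofReal_div, ofReal_cpow n.cast_nonneg, ofReal_natCast]
  rw [hterm, re_ofReal_mul]
  rcases le_or_gt δ |Real.log n - (Real.log x + δ)| with hfar | hnear
  · exact (mul_nonpos_of_nonneg_of_nonpos han (hf _ hfar)).trans
      (indicator_nonneg (fun n _ ↦ mul_nonneg (by positivity) (ha n)) n)
  rw [abs_lt] at hnear
  have hxn : x < n := (Real.log_lt_log_iff hx hn0).1 (by linarith)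
  have hnx : n ≤ Real.exp (2 * δ) * x := by
    rw [← Real.log_le_log_iff hn0 (by positivity), Real.log_mul (Real.exp_pos _).ne' hx.ne',
      Real.log_exp]
    linarith
  have hmem : n ∈ (Finset.Ioc ⌊x⌋₊ ⌊Real.exp (2 * δ) * x⌋₊ : Set ℕ) :=
    Finset.mem_coe.2 (Finset.mem_Ioc.2 ⟨(Nat.floor_lt hx.le).2 hxn, Nat.le_floor hnx⟩)
  have hpow : x ≤ (n : ℝ) ^ σ := hxn.le.trans (Real.self_le_rpow_of_one_le hn1 hσ)
  rw [indicator_of_mem hmem]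
  calc a n / (n : ℝ) ^ σ * (f _).re
      ≤ a n / (n : ℝ) ^ σ * M :=
        mul_le_mul_of_nonneg_left ((re_le_norm _).trans (hM _)) han
    _ ≤ a n / x * M := by have := ha n; gcongr
    _ = M / x * a n := by ring

theorem re_tsum_term_mul_le_sum_Ioc (ha : ∀ n, 0 ≤ a n) {f : ℝ → ℂ} {δ M : ℝ}
    (hM : ∀ y, ‖f y‖ ≤ M) (hf : ∀ y, δ ≤ |y| → (f y).re ≤ 0) {σ x : ℝ} (hσ : 1 ≤ σ) (hx : 0 < x)
    (hsum : LSeriesSummable (fun n ↦ a n) σ) :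
    (∑' n, LSeries.term (fun n ↦ a n) σ n * f (Real.log n - (Real.log x + δ))).re ≤
      M / x * ∑ n ∈ Finset.Ioc ⌊x⌋₊ ⌊Real.exp (2 * δ) * x⌋₊, a n := by
  have hsum' : Summable fun n ↦
      LSeries.term (fun n ↦ a n) σ n * f (Real.log n - (Real.log x + δ)) :=
    .of_norm_bounded (hsum.norm.mul_right M) fun n ↦ by
      rw [norm_mul]
      exact mul_le_mul_of_nonneg_left (hM _) (norm_nonneg _)
  have hind := hasSum_subtype_iff_indicator.1 (Finset.hasSum
    (Finset.Ioc ⌊x⌋₊ ⌊Real.exp (2 * δ) * x⌋₊) fun n ↦ M / x * a n)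
  rw [Finset.mul_sum]
  exact hasSum_le (re_term_mul_le_indicator_Ioc ha hM hf hσ hx) (hasSum_re hsum'.hasSum) hind

theorem exists_pos_eventually_mul_le_sum_Ioc (ha : ∀ n, 0 ≤ a n)
    (hsum : ∀ σ : ℝ, 1 < σ → LSeriesSummable (fun n ↦ a n) σ) {A : ℝ} (hA : 0 < A) {G : ℂ → ℂ}
    (hG : ContinuousOn G {s | 1 ≤ s.re})
    (hGa : EqOn G (fun s ↦ LSeries (fun n ↦ a n) s - A / (s - 1)) {s | 1 < s.re})
    {r : ℝ} (hr : 1 < r) :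
    ∃ c > 0, ∀ᶠ x : ℝ in atTop, c * x ≤ ∑ n ∈ Finset.Ioc ⌊x⌋₊ ⌊r * x⌋₊, a n := by
  let δ := Real.log r / 2
  have hδ : 0 < δ := half_pos (Real.log_pos hr)
  have hrδ : Real.exp (2 * δ) = r := by
    rw [mul_div_cancel₀ _ two_ne_zero, Real.exp_log (one_pos.trans hr)]
  obtain ⟨φ, hφ⟩ := exists_isMinorantKernel hδ
  obtain ⟨M, hM, hφM⟩ := (𝓕 φ).decay 0 0
  simp only [pow_zero, one_mul, norm_iteratedFDeriv_zero] at hφM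
  obtain ⟨B, hB, hBu⟩ := exists_tendsto_tsum_term_mul_fourier hsum hG hGa φ.continuous
    hφ.hasCompactSupport (𝓕 φ).integrable
  have hB0 : 0 < (A * φ 0).re := by
    rw [re_ofReal_mul]
    exact mul_pos hA hφ.re_apply_zero_pos
  have hu : Tendsto (fun x ↦ Real.log x + δ) atTop atTop :=
    tendsto_atTop_add_const_right _ δ Real.tendsto_log_atTop
  refine ⟨(A * φ 0).re / 2 / M, by positivity, ?_⟩
  have hBre := (continuous_re.tendsto _).comp (hB.comp hu)
  filter_upwards [hBre.eventually_const_lt (half_lt_self hB0), eventually_gt_atTop 0] with x hBx hx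
  have hle : (B (Real.log x + δ)).re ≤ M / x * ∑ n ∈ Finset.Ioc ⌊x⌋₊ ⌊r * x⌋₊, a n := by
    refine le_of_tendsto ((continuous_re.tendsto _).comp (hBu _)) ?_
    filter_upwards [self_mem_nhdsWithin] with σ hσ
    rw [← hrδ]
    exact re_tsum_term_mul_le_sum_Ioc ha hφM hφ.re_fourier_nonpos (le_of_lt hσ) hx (hsum σ hσ)
  calc (A * φ 0).re / 2 / M * x
      ≤ (M / x * ∑ n ∈ Finset.Ioc ⌊x⌋₊ ⌊r * x⌋₊, a n) / M * x := by
        gcongr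
        exact hBx.le.trans hle
    _ = ∑ n ∈ Finset.Ioc ⌊x⌋₊ ⌊r * x⌋₊, a n := by field_simp

end Tauberian

theorem exists_continuousOn_eqOn_LSeries_vonMangoldt_sub : ∃ G : ℂ → ℂ,
    ContinuousOn G {s | 1 ≤ s.re} ∧
    EqOn G (fun s ↦ LSeries (fun n ↦ vonMangoldt n) s - 1 / (s - 1)) {s | 1 < s.re} := by
  refine ⟨_, vonMangoldt.continuousOn_LFunctionResidueClassAux (q := 1) 1, fun s hs ↦ ?_⟩
  have hΛ : vonMangoldt.residueClass (1 : ZMod 1) = fun n ↦ vonMangoldt n :=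
    indicator_eq_self.2 fun n _ ↦ Subsingleton.elim _ _
  simp [vonMangoldt.eqOn_LFunctionResidueClassAux (q := 1) isUnit_one hs, hΛ]

theorem psi_sub_psi {x y : ℝ} (h : x ≤ y) :
    psi y - psi x = ∑ n ∈ Finset.Ioc ⌊x⌋₊ ⌊y⌋₊, vonMangoldt n := by
  rw [psi, psi, sub_eq_iff_eq_add', Finset.sum_Ioc_consecutive _ (Nat.zero_le _) (Nat.floor_mono h)]

theorem exists_pos_eventually_mul_le_psi_sub_psi {r : ℝ} (hr : 1 < r) :
    ∃ c > 0, ∀ᶠ x in atTop, c * x ≤ psi (r * x) - psi x := by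
  obtain ⟨G, hG, hGΛ⟩ := exists_continuousOn_eqOn_LSeries_vonMangoldt_sub
  obtain ⟨c, hc, h⟩ := exists_pos_eventually_mul_le_sum_Ioc (a := fun n ↦ vonMangoldt n)
    (fun n ↦ ArithmeticFunction.vonMangoldt_nonneg)
    (fun σ hσ ↦ ArithmeticFunction.LSeriesSummable_vonMangoldt (by simpa using hσ))
    one_pos hG (by simpa using hGΛ) hr
  refine ⟨c, hc, ?_⟩
  filter_upwards [h, eventually_ge_atTop 0] with x hx hx0
  rwa [psi_sub_psi (le_mul_of_one_le_left hx0 hr.le)]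

theorem eventually_theta_lt_theta_mul {r : ℝ} (hr : 1 < r) :
    ∀ᶠ x in atTop, theta x < theta (r * x) := by
  obtain ⟨c, hc, hψ⟩ := exists_pos_eventually_mul_le_psi_sub_psi hr
  obtain ⟨C, hC⟩ := Chebyshev.psi_sub_theta_le_mul_sqrt
  have hr0 : 0 < r := one_pos.trans hr
  have hsqrt : ∀ᶠ x in atTop, C * √r / c < √x := Real.tendsto_sqrt_atTop.eventually_gt_atTop _
  filter_upwards [hψ, hsqrt, eventually_gt_atTop 0] with x hx hsx hx0
  have hpow : psi (r * x) - theta (r * x) < c * x := calc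
    psi (r * x) - theta (r * x) ≤ C * √r * √x := by
      rw [mul_assoc, ← Real.sqrt_mul hr0.le]
      exact hC _
    _ < c * √x * √x := by
      rw [div_lt_iff₀' hc] at hsx
      gcongr
    _ = c * x := by rw [mul_assoc, Real.mul_self_sqrt hx0.le]
  linarith [Chebyshev.theta_le_psi x]

theorem exists_prime_of_theta_lt_theta {x y : ℝ} (h : theta x < theta y) :
    ∃ p : ℕ, p.Prime ∧ x < p ∧ p ≤ y := by
  by_contra! hp
  refine h.not_ge ?_
  simp only [Chebyshev.theta]
  refine Finset.sum_le_sum_of_subset_of_nonneg ?_ fun p _ _ ↦ Real.log_natCast_nonneg p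
  intro p hpy
  simp only [Finset.mem_filter, Finset.mem_Ioc] at hpy ⊢
  obtain ⟨⟨hp0, hpy⟩, hpp⟩ := hpy
  refine ⟨⟨hp0, Nat.le_floor (not_lt.1 fun hx ↦ ?_)⟩, hpp⟩
  exact (hp p hpp hx).not_ge ((Nat.le_floor_iff' hp0.ne').1 hpy)

theorem eventually_exists_prime_le_mul {r : ℝ} (hr : 1 < r) :
    ∀ᶠ x : ℝ in atTop, ∃ p : ℕ, p.Prime ∧ x < p ∧ p ≤ r * x :=
  (eventually_theta_lt_theta_mul hr).mono fun _ ↦ exists_prime_of_theta_lt_theta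

theorem lt_succPrime (n : ℕ) : n < succPrime n := by
  obtain ⟨q, hnq, hq⟩ := Nat.exists_infinite_primes (n + 1)
  exact (Nat.sInf_mem (s := {q : ℕ | q.Prime ∧ n < q}) ⟨q, hq, hnq⟩).2

theorem succPrime_le {n q : ℕ} (hq : q.Prime) (hnq : n < q) : succPrime n ≤ q :=
  Nat.sInf_le ⟨hq, hnq⟩

theorem prime_gap_ratio_tendsto_zero_general :
    Tendsto (fun n : ℕ ↦ ((succPrime n : ℝ) - n) / n) atTop (𝓝 0) := by
  refine tendsto_order.2 ⟨fun ε hε ↦ .of_forall fun n ↦ hε.trans_le ?_, fun ε hε ↦ ?_⟩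
  · have := lt_succPrime n
    exact div_nonneg (sub_nonneg.2 (mod_cast this.le)) n.cast_nonneg
  · have hr : 1 < 1 + ε / 2 := by linarith
    filter_upwards [tendsto_natCast_atTop_atTop.eventually (eventually_exists_prime_le_mul hr),
      eventually_gt_atTop 0] with n ⟨q, hq, hnq, hqn⟩ hn
    have hn' : (0 : ℝ) < n := mod_cast hn
    have hle : (succPrime n : ℝ) ≤ q := mod_cast succPrime_le hq (mod_cast hnq)
    rw [div_lt_iff₀ hn']
    linarith [mul_pos hε hn']

/-- (p_succ - p)/p → 0 as p → ∞ along primes. -/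
theorem prime_gap_ratio_tendsto_zero :
    Filter.Tendsto (fun p : ℕ => ((succPrime p : ℝ) - p) / p)
      (Filter.atTop ⊓ Filter.principal {p : ℕ | p.Prime}) (nhds 0) :=
  prime_gap_ratio_tendsto_zero_general.mono_left inf_le_left
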